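/- arXiv:0802.4156 — 2 statements merged into one kernel-verified Lean document; each statement's English description precedes it below -/
import Mathlib

section
/- Let A be a real κ×κ matrix all of whose complex eigenvalues have negative real part (A is Hurwitz). Then there exists a symmetric positive definite real κ×κ matrix P such that the matrix −(AᵀP + PA) is positive definite; equivalently, the quadratic form W(z) = zᵀPz satisfies ∇W(z)·(Az) < 0 for all z ≠ 0. -/
open scoped BigOperators Matrix

lemma aux_det {n : ℕ} (A B : Matrix (Fin n) (Fin n) ℂ)
    (hA : ∀ μ : ℂ, A.charpoly.IsRoot μ → μ.re < 0)
    (hB : B * (1 - A) = 1 + A) (l : ℂ) (hl : l ∈ spectrum ℂ B) : ‖l‖ < 1 := by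
  have hdet : (Matrix.scalar (Fin n) l - B).det = 0 := by
    rw [Matrix.mem_spectrum_iff_isRoot_charpoly, Polynomial.IsRoot.def, Matrix.eval_charpoly] at hl
    exact hl
  have h1 : (Matrix.scalar (Fin n) l - B) * (1 - A) = (l - 1) • (1 : Matrix (Fin n) (Fin n) ℂ) - (l + 1) • A := by
    rw [sub_mul, hB, Matrix.scalar_apply, ← Matrix.smul_one_eq_diagonal, smul_mul_assoc, one_mul, smul_sub, sub_smul, add_smul,
      one_smul, one_smul]
    abel
  have h2 : ((l - 1) • (1 : Matrix (Fin n) (Fin n) ℂ) - (l + 1) • A).det = 0 := by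
    rw [← h1, Matrix.det_mul, hdet, zero_mul]
  by_cases hl1 : l + 1 = 0
  · have : l = -1 := by linear_combination hl1
    subst this
    rw [hl1, zero_smul, sub_zero, Matrix.det_smul, Matrix.det_one, mul_one] at h2
    have h3 := eq_zero_of_pow_eq_zero h2
    norm_num at h3
  · have h3 : (l - 1) • (1 : Matrix (Fin n) (Fin n) ℂ) - (l + 1) • A
        = (l + 1) • (Matrix.scalar (Fin n) ((l - 1) / (l + 1)) - A) := by
      rw [smul_sub, Matrix.scalar_apply, ← Matrix.smul_one_eq_diagonal, smul_smul, mul_div_cancel₀ _ hl1]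
    rw [h3, Matrix.det_smul] at h2
    have h4 := (mul_eq_zero.1 h2).resolve_left (pow_ne_zero _ hl1)
    have h5 := hA ((l - 1) / (l + 1)) (by
      rw [Polynomial.IsRoot.def, Matrix.eval_charpoly]; exact h4)
    have h6 : 0 < Complex.normSq (l + 1) := Complex.normSq_pos.2 hl1
    rw [Complex.div_re, ← add_div, div_neg_iff] at h5
    have h7 : l.re * l.re + l.im * l.im < 1 := by
      rcases h5 with h5 | h5
      · linarith [h5.2]
      · have := h5.1
        simp at this
        nlinarith
    have h8 : ‖l‖ ^ 2 < 1 := by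
      rw [← Complex.normSq_eq_norm_sq, Complex.normSq_apply]; exact h7
    nlinarith [norm_nonneg l]

open scoped Matrix.Norms.L2Operator in
lemma aux_pow {n : ℕ} (hn : 1 ≤ n) (B : Matrix (Fin n) (Fin n) ℂ)
    (h : ∀ l ∈ spectrum ℂ B, ‖l‖ < 1) : ∃ N : ℕ, 0 < N ∧ ‖B ^ N‖ < 1 := by
  have : Nonempty (Fin n) := ⟨⟨0, hn⟩⟩
  have h1 : spectralRadius ℂ B < (1 : NNReal) := by
    apply spectrum.spectralRadius_lt_of_forall_lt
    intro k hk
    exact_mod_cast h k hk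
  have h2 := spectrum.pow_nnnorm_pow_one_div_tendsto_nhds_spectralRadius B
  have h3 := (h2.eventually (gt_mem_nhds h1)).and (Filter.eventually_gt_atTop 0)
  obtain ⟨N, hN, hN0⟩ := h3.exists
  refine ⟨N, hN0, ?_⟩
  by_contra hc
  push Not at hc
  have h5 : (1 : ENNReal) ≤ (‖B ^ N‖₊ : ENNReal) := by exact_mod_cast hc
  have h6 := ENNReal.one_le_rpow h5 (z := 1 / (N : ℝ)) (by positivity)
  exact absurd hN (not_lt.2 h6)

open scoped Matrix.Norms.L2Operator in
lemma aux_contr {n : ℕ} (C : Matrix (Fin n) (Fin n) ℝ)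
    (h : ‖C.map (algebraMap ℝ ℂ)‖ < 1) (v : Fin n → ℝ) (hv : v ≠ 0) :
    (C *ᵥ v) ⬝ᵥ (C *ᵥ v) < v ⬝ᵥ v := by
  have key : ∀ w : Fin n → ℝ,
      ‖(WithLp.toLp 2 (fun i => (w i : ℂ)) : EuclideanSpace ℂ (Fin n))‖ ^ 2 = w ⬝ᵥ w := by
    intro w
    rw [EuclideanSpace.norm_sq_eq]
    simp [dotProduct, sq]
  have h0 := Matrix.l2_opNorm_mulVec (C.map (algebraMap ℝ ℂ))
    (WithLp.toLp 2 (fun i => (v i : ℂ)))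
  have h1 : (C.map (algebraMap ℝ ℂ)) *ᵥ (fun i => (v i : ℂ)) = fun i => ((C *ᵥ v) i : ℂ) := by
    ext i
    simp [Matrix.mulVec, dotProduct]
  change ‖(WithLp.toLp 2 ((C.map (algebraMap ℝ ℂ)) *ᵥ (fun i => (v i : ℂ))) : EuclideanSpace ℂ (Fin n))‖ ≤ _ at h0
  rw [h1] at h0
  rw [← key, ← key v]
  have hp : 0 < ‖(WithLp.toLp 2 (fun i => (v i : ℂ)) : EuclideanSpace ℂ (Fin n))‖ := by
    rw [norm_pos_iff]
    intro hz
    apply hv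
    ext i
    have := congrArg (fun f : EuclideanSpace ℂ (Fin n) => f i) hz
    simpa using this
  refine pow_lt_pow_left₀ (lt_of_le_of_lt h0 ?_) (norm_nonneg _) two_ne_zero
  nlinarith

lemma aux_self {n : ℕ} (C : Matrix (Fin n) (Fin n) ℝ) (v : Fin n → ℝ) :
    v ⬝ᵥ ((Cᵀ * C) *ᵥ v) = (C *ᵥ v) ⬝ᵥ (C *ᵥ v) := by
  rw [← Matrix.mulVec_mulVec, Matrix.dotProduct_mulVec, Matrix.vecMul_transpose]

lemma aux_posDef {n : ℕ} (P : Matrix (Fin n) (Fin n) ℝ) (hs : P.IsSymm)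
    (h : ∀ v, v ≠ 0 → 0 < v ⬝ᵥ (P *ᵥ v)) : P.PosDef := by
  apply Matrix.PosDef.of_dotProduct_mulVec_pos
  · rw [Matrix.IsHermitian, Matrix.conjTranspose_eq_transpose_of_trivial]; exact hs
  · intro v hv
    simpa using h v hv

theorem stmt11 (κ : ℕ) (hκ : 1 ≤ κ) (A : Matrix (Fin κ) (Fin κ) ℝ)
    (hHurwitz : ∀ μ : ℂ,
      ((A.map (algebraMap ℝ ℂ)).charpoly).IsRoot μ → μ.re < 0) :
    ∃ P : Matrix (Fin κ) (Fin κ) ℝ,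
      P.IsSymm ∧ P.PosDef ∧ (-(Aᵀ * P + P * A)).PosDef ∧
        ∀ z : Fin κ → ℝ, z ≠ 0 →
          z ⬝ᵥ ((Aᵀ * P + P * A).mulVec z) < 0 := by
  have hdet : IsUnit (1 - A).det := by
    rw [isUnit_iff_ne_zero]
    intro h0
    have h1 : (A.map (algebraMap ℝ ℂ)).charpoly.IsRoot ((algebraMap ℝ ℂ) 1) := by
      rw [Matrix.charpoly_map]
      apply Polynomial.IsRoot.map
      rw [Polynomial.IsRoot.def, Matrix.eval_charpoly, map_one]
      exact h0
    have := hHurwitz _ h1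
    simp at this
    linarith
  obtain ⟨B, hB⟩ : ∃ B : Matrix (Fin κ) (Fin κ) ℝ, B * (1 - A) = 1 + A :=
    ⟨(1 + A) * (1 - A)⁻¹, by rw [mul_assoc, Matrix.nonsing_inv_mul _ hdet, mul_one]⟩
  have hBc : B.map (algebraMap ℝ ℂ) * (1 - A.map (algebraMap ℝ ℂ))
      = 1 + A.map (algebraMap ℝ ℂ) := by
    have := congrArg (algebraMap ℝ ℂ).mapMatrix hB
    simpa only [map_mul, map_sub, map_add, map_one, RingHom.mapMatrix_apply] using this
  obtain ⟨N, hN0, hN⟩ := aux_pow hκ _ (fun l hl => aux_det _ _ hHurwitz hBc l hl)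
  have hpow : (B.map (algebraMap ℝ ℂ)) ^ N = (B ^ N).map (algebraMap ℝ ℂ) :=
    (map_pow (algebraMap ℝ ℂ).mapMatrix B N).symm
  rw [hpow] at hN
  have hcon := aux_contr _ hN
  set P : Matrix (Fin κ) (Fin κ) ℝ := ∑ k ∈ Finset.range N, (B ^ k)ᵀ * B ^ k with hP
  have hPs : Pᵀ = P := by
    simp [hP, Matrix.transpose_sum]
  have hPpos : ∀ v, v ≠ 0 → 0 < v ⬝ᵥ (P *ᵥ v) := by
    intro v hv
    rw [hP, Matrix.sum_mulVec, dotProduct_sum]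
    apply Finset.sum_pos'
    · intro i _
      rw [aux_self]
      exact Finset.sum_nonneg fun j _ => mul_self_nonneg _
    · refine ⟨0, Finset.mem_range.2 hN0, ?_⟩
      rw [aux_self, pow_zero, Matrix.one_mulVec]
      exact lt_of_le_of_ne (Finset.sum_nonneg fun j _ => mul_self_nonneg _)
        (fun h => hv (dotProduct_self_eq_zero.1 h.symm))
  have htel : Bᵀ * P * B - P = (B ^ N)ᵀ * B ^ N - 1 := by
    have e : Bᵀ * P * B = ∑ k ∈ Finset.range N, (B ^ (k + 1))ᵀ * B ^ (k + 1) := by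
      rw [hP, Finset.mul_sum, Finset.sum_mul]
      refine Finset.sum_congr rfl fun k _ => ?_
      rw [pow_succ, Matrix.transpose_mul]
      simp only [mul_assoc]
    rw [e, hP, ← Finset.sum_sub_distrib, Finset.sum_range_sub (fun k => (B ^ k)ᵀ * B ^ k)]
    simp
  have hlyap : (1 - A)ᵀ * ((B ^ N)ᵀ * B ^ N - 1) * (1 - A) = (2 : ℝ) • (Aᵀ * P + P * A) := by
    rw [← htel]
    have : (1 - A)ᵀ * (Bᵀ * P * B - P) * (1 - A)
        = (B * (1 - A))ᵀ * P * (B * (1 - A)) - (1 - A)ᵀ * P * (1 - A) := by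
      rw [Matrix.transpose_mul]; noncomm_ring
    rw [this, hB, two_smul]
    simp only [Matrix.transpose_add, Matrix.transpose_sub, Matrix.transpose_one]
    noncomm_ring
  have hneg : ∀ z : Fin κ → ℝ, z ≠ 0 → z ⬝ᵥ ((Aᵀ * P + P * A).mulVec z) < 0 := by
    intro z hz
    have hw : (1 - A) *ᵥ z ≠ 0 := fun h0 =>
      hz (Matrix.eq_zero_of_mulVec_eq_zero hdet.ne_zero h0)
    have h1 := hcon _ hw
    have h2 : z ⬝ᵥ (((2 : ℝ) • (Aᵀ * P + P * A)) *ᵥ z) < 0 := by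
      rw [← hlyap, mul_assoc, ← Matrix.mulVec_mulVec, ← Matrix.mulVec_mulVec,
        Matrix.dotProduct_mulVec, Matrix.vecMul_transpose, Matrix.sub_mulVec ((B ^ N)ᵀ * B ^ N) 1, dotProduct_sub,
        aux_self, Matrix.one_mulVec]
      linarith
    rw [Matrix.smul_mulVec, dotProduct_smul, smul_eq_mul] at h2
    linarith
  refine ⟨P, hPs, aux_posDef P hPs hPpos, aux_posDef _ ?_ ?_, hneg⟩
  · rw [Matrix.IsSymm, Matrix.transpose_neg, Matrix.transpose_add, Matrix.transpose_mul,
      Matrix.transpose_mul, Matrix.transpose_transpose, hPs, add_comm]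
  · intro v hv
    rw [Matrix.neg_mulVec, dotProduct_neg]
    linarith [hneg v hv]
end

section
/- Let λ > 0, let g : [0,∞) → [0,∞) be continuous, and let y : [0,∞) → ℝ be differentiable with y′(t) ≤ −2λ·y(t) + g(t) for all t ≥ 0. Then for all t ≥ 0: y(t) ≤ e^{−2λt} y(0) + (1/λ) · sup_{0 ≤ s ≤ t} e^{−λ(t−s)} g(s). -/
/-- the fading-memory Grönwall-type estimate: if `y` is
differentiable on `[0,∞)` with `y′(t) ≤ −2λ·y(t) + g(t)` for a continuous
nonnegative `g`, then `y(t) ≤ e^{−2λt} y(0) + (1/λ) sup_{0≤s≤t} e^{−λ(t−s)} g(s)`. -/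
theorem stmt12 (lam : ℝ) (hlam : 0 < lam)
    (g : ℝ → ℝ) (hg : Continuous g) (hgnn : ∀ t, 0 ≤ t → 0 ≤ g t)
    (y : ℝ → ℝ) (hy : ∀ t, 0 ≤ t → DifferentiableAt ℝ y t)
    (hineq : ∀ t, 0 ≤ t → deriv y t ≤ -(2 * lam) * y t + g t) :
    ∀ t, 0 ≤ t →
      y t ≤ Real.exp (-(2 * lam) * t) * y 0 +
        (1 / lam) * sSup ((fun s => Real.exp (-lam * (t - s)) * g s) ''
          Set.Icc (0 : ℝ) t) := by
  intro t ht
  set M := sSup ((fun s => Real.exp (-lam * (t - s)) * g s) '' Set.Icc (0 : ℝ) t) with hM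
  have hbdd : BddAbove ((fun s => Real.exp (-lam * (t - s)) * g s) '' Set.Icc (0 : ℝ) t) := by
    apply (isCompact_Icc.image _).bddAbove
    fun_prop
  have hle : ∀ s ∈ Set.Icc (0 : ℝ) t, Real.exp (-lam * (t - s)) * g s ≤ M := fun s hs =>
    le_csSup hbdd ⟨s, hs, rfl⟩
  have hM0 : 0 ≤ M :=
    le_trans (mul_nonneg (Real.exp_pos _).le (hgnn t ht)) (hle t ⟨ht, le_refl t⟩)
  have hexp : ∀ c x : ℝ, HasDerivAt (fun s => Real.exp (c * s)) (Real.exp (c * x) * c) x := by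
    intro c x
    simpa using ((hasDerivAt_id x).const_mul c).exp
  have hz : ∀ x, 0 ≤ x → HasDerivAt
      (fun s => Real.exp (2 * lam * s) * y s - M / lam * Real.exp (lam * t) * Real.exp (lam * s))
      (Real.exp (2 * lam * x) * (2 * lam) * y x + Real.exp (2 * lam * x) * deriv y x
        - M / lam * Real.exp (lam * t) * (Real.exp (lam * x) * lam)) x := by
    intro x hx
    exact ((hexp (2 * lam) x).mul (hy x hx).hasDerivAt).sub ((hexp lam x).const_mul _)
  have hanti := antitoneOn_of_hasDerivWithinAt_nonpos (convex_Icc (0 : ℝ) t)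
    (fun x hx => (hz x hx.1).continuousAt.continuousWithinAt)
    (fun x hx => (hz x (interior_subset hx).1).hasDerivWithinAt) (by
      intro x hx
      have hx' := interior_subset hx
      have h1 := mul_le_mul_of_nonneg_left (hineq x hx'.1) (Real.exp_pos (2 * lam * x)).le
      have h2 := mul_le_mul_of_nonneg_left (hle x hx')
        (Real.exp_pos (lam * t + lam * x)).le
      rw [← mul_assoc, ← Real.exp_add,
        show lam * t + lam * x + -lam * (t - x) = 2 * lam * x by ring, Real.exp_add] at h2
      have h3 : M / lam * Real.exp (lam * t) * (Real.exp (lam * x) * lam)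
          = Real.exp (lam * t) * Real.exp (lam * x) * M := by
        field_simp
      rw [h3]
      linarith)
  have h := hanti ⟨le_refl 0, ht⟩ ⟨ht, le_refl t⟩ ht
  simp only [mul_zero, Real.exp_zero, one_mul, mul_one] at h
  have hpos : 0 ≤ M / lam * Real.exp (lam * t) := by positivity
  have h4 : Real.exp (2 * lam * t) * y t
      ≤ y 0 + M / lam * (Real.exp (lam * t) * Real.exp (lam * t)) := by linarith
  rw [← Real.exp_add, show lam * t + lam * t = 2 * lam * t by ring] at h4
  have h5 := mul_le_mul_of_nonneg_left h4 (Real.exp_pos (-(2 * lam) * t)).le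
  have h6 : Real.exp (-(2 * lam) * t) * Real.exp (2 * lam * t) = 1 := by
    rw [← Real.exp_add]; simp
  calc y t = Real.exp (-(2 * lam) * t) * Real.exp (2 * lam * t) * y t := by rw [h6, one_mul]
    _ ≤ Real.exp (-(2 * lam) * t) * (y 0 + M / lam * Real.exp (2 * lam * t)) := by
      rw [mul_assoc]; exact h5
    _ = Real.exp (-(2 * lam) * t) * y 0
        + M / lam * (Real.exp (-(2 * lam) * t) * Real.exp (2 * lam * t)) := by ring
    _ = _ := by rw [h6]; ring
end
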